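/- For every m ∈ ℕ, lim_{k→∞} (1/(2k−1)!!) · Σ_{v,h≥0} h(h−1)⋯(h−m+1) · D_{k,v,h} = 1; that is, every factorial moment of the number of horizontal dominoes in a uniformly random configuration of the 2×k memory game tends to 1 as k → ∞. -/

import Mathlib

/-!
The sum `∑ h(h-1)⋯(h-m+1) D_{k,v,h}` is a sum over configurations `P` of the falling factorial of
the number of horizontal dominoes of `P`. Double counting pairs `S ⊆ P` with `S` a set of `m`
horizontal dominoes turns it into `m! * a_m(k) * (2(k-m)-1)!!`, where `a_m(k)` is the number of
sets of `m` pairwise disjoint horizontal domino positions (`sum_descFactorial`): once `S` is fixed,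
`P \ S` is an arbitrary perfect matching of the remaining `2(k-m)` cells, and a set of size `2n` has
`(2n-1)!!` perfect matchings (`card_perfMatch`).

There are `2(k-1)` horizontal positions and each of them meets at most three, so
`∏_{i<m} (2(k-1) - 3i) ≤ m! * a_m(k) ≤ (2k)^m`
(`prod_le_factorial_mul_card_matchSets`, `factorial_mul_card_matchSets_le`), while
`(2k-1)!! = ∏_{i<m} (2k - 2i - 1) * (2(k-m)-1)!!`. All these products are asymptotic to `(2k)^m`,
hence the ratio tends to `1`.
-/

/-- A cell of the `2 × k` array. -/
abbrev Cell (k : ℕ) := Fin 2 × Fin k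

/-- `P` is a partition of the cells of the `2 × k` array into (unordered) pairs,
i.e., a configuration of the `2 × k` game of memory (with indistinguishable pairs). -/
def IsPairPartition {k : ℕ} (P : Finset (Finset (Cell k))) : Prop :=
  (∀ p ∈ P, p.card = 2) ∧ (∀ p ∈ P, ∀ q ∈ P, p ≠ q → p ∩ q = ∅) ∧
    (∀ x : Cell k, ∃ p ∈ P, x ∈ p)

/-- `p` is a vertical cell-pair (vertical domino position). -/
def IsVert {k : ℕ} (p : Finset (Cell k)) : Prop :=
  ∃ j : Fin k, p = {((0 : Fin 2), j), ((1 : Fin 2), j)}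

/-- `p` is a horizontal cell-pair (horizontal domino position). -/
def IsHoriz {k : ℕ} (p : Finset (Cell k)) : Prop :=
  ∃ (i : Fin 2) (j j' : Fin k), (j' : ℕ) = (j : ℕ) + 1 ∧ p = {(i, j), (i, j')}

/-- An edge of the `2 × k` grid graph (two cells agreeing in one coordinate and
differing by exactly 1 in the other) is exactly a vertical or horizontal cell-pair. -/
def IsGridEdge {k : ℕ} (e : Finset (Cell k)) : Prop := IsVert e ∨ IsHoriz e

open scoped Classical in
/-- `D k v h`: the number of configurations of the `2 × k` game of memory having
exactly `v` vertical and exactly `h` horizontal dominoes. -/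
noncomputable def D (k v h : ℕ) : ℕ :=
  (Finset.univ.filter fun P : Finset (Finset (Cell k)) =>
    IsPairPartition P ∧ (P.filter fun p => IsVert p).card = v ∧
      (P.filter fun p => IsHoriz p).card = h).card

open scoped Classical in
/-- `rho j k v h`: the sum, over all choices of a set `V` of `v` vertical cell-pairs
and a set `H` of `h` horizontal cell-pairs such that the chosen pairs are pairwise
disjoint, of the number of `j`-edge matchings of the subgraph of the `2 × k` grid
graph induced on the cells not belonging to any chosen pair.
(Counted as triples `(V, H, M)`.) -/
noncomputable def rho (j k v h : ℕ) : ℕ :=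
  (Finset.univ.filter fun T :
      Finset (Finset (Cell k)) × Finset (Finset (Cell k)) × Finset (Finset (Cell k)) =>
    (∀ p ∈ T.1, IsVert p) ∧ T.1.card = v ∧
    (∀ p ∈ T.2.1, IsHoriz p) ∧ T.2.1.card = h ∧
    (∀ p ∈ T.1 ∪ T.2.1, ∀ q ∈ T.1 ∪ T.2.1, p ≠ q → p ∩ q = ∅) ∧
    (∀ e ∈ T.2.2, IsGridEdge e) ∧ T.2.2.card = j ∧
    (∀ e ∈ T.2.2, ∀ f ∈ T.2.2, e ≠ f → e ∩ f = ∅) ∧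
    (∀ e ∈ T.2.2, ∀ p ∈ T.1 ∪ T.2.1, e ∩ p = ∅)).card

/-- `df n` is the double factorial `(2n-1)!! = (2n)! / (2^n n!)`, with
`df 0 = (-1)!! = 1`. -/
def df (n : ℕ) : ℕ := (2 * n).factorial / (2 ^ n * n.factorial)

/-! ### Counting perfect matchings of a finite set -/

section Matchings

open scoped Classical

variable {α : Type*} [DecidableEq α]

/-- `S` is a (partial) matching inside `U`: a set of pairwise disjoint 2-element subsets
of `U`. -/
def IsMatch (U : Finset α) (S : Finset (Finset α)) : Prop :=
  (∀ p ∈ S, p.card = 2 ∧ p ⊆ U) ∧ ∀ p ∈ S, ∀ q ∈ S, p ≠ q → p ∩ q = ∅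

/-- The finite set of all perfect matchings of the finite set `U`. -/
noncomputable def perfMatch (U : Finset α) : Finset (Finset (Finset α)) :=
  U.powerset.powerset.filter fun P => IsMatch U P ∧ ∀ x ∈ U, ∃ p ∈ P, x ∈ p

lemma mem_perfMatch {U : Finset α} {P : Finset (Finset α)} :
    P ∈ perfMatch U ↔ IsMatch U P ∧ ∀ x ∈ U, ∃ p ∈ P, x ∈ p := by
  simp only [perfMatch, Finset.mem_filter, Finset.mem_powerset, and_iff_right_iff_imp]
  intro h p hp
  exact Finset.mem_powerset.2 (h.1.1 p hp).2

lemma IsMatch.eq_of_mem {U : Finset α} {S : Finset (Finset α)} (h : IsMatch U S)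
    {p q : Finset α} (hp : p ∈ S) (hq : q ∈ S) {x : α} (hxp : x ∈ p) (hxq : x ∈ q) : p = q := by
  by_contra hne
  have := h.2 p hp q hq hne
  have hx : x ∈ p ∩ q := Finset.mem_inter.2 ⟨hxp, hxq⟩
  simp [this] at hx

/-- Perfect matchings of `U` extending a matching `S` are the perfect matchings of the points
not covered by `S`, via `P ↦ P \ S`. -/
lemma card_perfMatch_superset {U : Finset α} {S : Finset (Finset α)} (hS : IsMatch U S) :
    ((perfMatch U).filter fun P => S ⊆ P).card = (perfMatch (U \ S.biUnion id)).card := by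
  have key : ∀ Q ∈ perfMatch (U \ S.biUnion id), ∀ p ∈ Q, ∀ q ∈ S, ∀ x ∈ p, x ∉ q := by
    intro Q hQ p hp q hq x hxp hxq
    have := ((mem_perfMatch.1 hQ).1.1 p hp).2 hxp
    simp only [Finset.mem_sdiff, Finset.mem_biUnion, id] at this
    exact this.2 ⟨q, hq, hxq⟩
  have hne : ∀ Q ∈ perfMatch (U \ S.biUnion id), ∀ p ∈ Q, p ∉ S := by
    intro Q hQ p hp hpS
    have h2 := ((mem_perfMatch.1 hQ).1.1 p hp).1
    obtain ⟨x, hx⟩ : p.Nonempty := Finset.card_pos.1 (by omega)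
    exact key Q hQ p hp p hpS x hx hx
  refine Finset.card_bij' (fun P _ => P \ S) (fun Q _ => Q ∪ S) ?_ ?_ ?_ ?_
  · intro P hP
    obtain ⟨hP, hSP⟩ := Finset.mem_filter.1 hP
    obtain ⟨hM, hc⟩ := mem_perfMatch.1 hP
    refine mem_perfMatch.2 ⟨⟨?_, ?_⟩, ?_⟩
    · intro p hp
      obtain ⟨hpP, hpS⟩ := Finset.mem_sdiff.1 hp
      refine ⟨(hM.1 p hpP).1, fun x hx => ?_⟩
      simp only [Finset.mem_sdiff, Finset.mem_biUnion, id]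
      refine ⟨(hM.1 p hpP).2 hx, ?_⟩
      rintro ⟨q, hq, hxq⟩
      exact hpS (hM.eq_of_mem hpP (hSP hq) hx hxq ▸ hq)
    · intro p hp q hq
      exact hM.2 p (Finset.mem_sdiff.1 hp).1 q (Finset.mem_sdiff.1 hq).1
    · intro x hx
      simp only [Finset.mem_sdiff, Finset.mem_biUnion, id] at hx
      obtain ⟨p, hp, hxp⟩ := hc x hx.1
      exact ⟨p, Finset.mem_sdiff.2 ⟨hp, fun h => hx.2 ⟨p, h, hxp⟩⟩, hxp⟩
  · intro Q hQ
    obtain ⟨hM, hc⟩ := mem_perfMatch.1 hQ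
    refine Finset.mem_filter.2 ⟨mem_perfMatch.2 ⟨⟨?_, ?_⟩, ?_⟩, Finset.subset_union_right⟩
    · intro p hp
      rcases Finset.mem_union.1 hp with hp | hp
      · exact ⟨(hM.1 p hp).1, (hM.1 p hp).2.trans Finset.sdiff_subset⟩
      · exact hS.1 p hp
    · intro p hp q hq hpq
      rcases Finset.mem_union.1 hp with hp | hp <;> rcases Finset.mem_union.1 hq with hq | hq
      · exact hM.2 p hp q hq hpq
      · ext x
        simpa using key Q hQ p hp q hq x
      · ext x
        have := key Q hQ q hq p hp x
        simp only [Finset.mem_inter, Finset.notMem_empty, iff_false]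
        tauto
      · exact hS.2 p hp q hq hpq
    · intro x hx
      by_cases hxS : x ∈ S.biUnion id
      · obtain ⟨p, hp, hxp⟩ := Finset.mem_biUnion.1 hxS
        exact ⟨p, Finset.mem_union_right _ hp, hxp⟩
      · obtain ⟨p, hp, hxp⟩ := hc x (Finset.mem_sdiff.2 ⟨hx, hxS⟩)
        exact ⟨p, Finset.mem_union_left _ hp, hxp⟩
  · intro P hP
    exact Finset.sdiff_union_of_subset (Finset.mem_filter.1 hP).2
  · intro Q hQ
    ext p
    have := hne Q hQ p
    simp only [Finset.mem_sdiff, Finset.mem_union]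
    tauto

lemma IsMatch.card_biUnion {U : Finset α} {S : Finset (Finset α)} (hS : IsMatch U S) :
    (S.biUnion id).card = 2 * S.card := by
  rw [Finset.card_biUnion]
  · simp only [id]
    rw [Finset.sum_congr rfl (g := fun _ => 2) (fun p hp => (hS.1 p hp).1)]
    simp [mul_comm]
  · intro p hp q hq hpq
    exact Finset.disjoint_iff_inter_eq_empty.2 (hS.2 p hp q hq hpq)

lemma df_mul (n : ℕ) : df n * (2 ^ n * n.factorial) = (2 * n).factorial := by
  unfold df
  apply Nat.div_mul_cancel
  rw [← Nat.doubleFactorial_two_mul]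
  rcases n with _ | n
  · simp
  · rw [show 2 * (n + 1) = (2 * n + 1) + 1 by ring, Nat.factorial_eq_mul_doubleFactorial]
    exact dvd_mul_right _ _

lemma df_pos (n : ℕ) : 0 < df n := by
  have := df_mul n
  have h := (2 * n).factorial_pos
  rw [← this] at h
  exact Nat.pos_of_mul_pos_right h

lemma df_succ (n : ℕ) : df (n + 1) = (2 * n + 1) * df n := by
  have h1 := df_mul (n + 1)
  have h0 := df_mul n
  rw [show 2 * (n + 1) = (2 * n + 1) + 1 by ring, Nat.factorial_succ (2 * n + 1),
    Nat.factorial_succ (2 * n), ← h0, Nat.factorial_succ n, pow_succ] at h1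
  have hp : 0 < 2 ^ n * n.factorial * (2 * (n + 1)) := by positivity
  apply Nat.eq_of_mul_eq_mul_right hp
  linarith

/-- A set of size `2n` has `(2n-1)!!` perfect matchings: fix a point `x` and sum over its
partner `y`. -/
lemma card_perfMatch (n : ℕ) : ∀ U : Finset α, U.card = 2 * n → (perfMatch U).card = df n := by
  induction n with
  | zero =>
    intro U hU
    obtain rfl : U = ∅ := by simpa using hU
    have : perfMatch (∅ : Finset α) = {∅} := by
      ext P
      rw [mem_perfMatch, Finset.mem_singleton]
      constructor
      · rintro ⟨h, -⟩
        refine Finset.eq_empty_of_forall_notMem fun p hp => ?_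
        have h1 := h.1 p hp
        rw [Finset.subset_empty] at h1
        simp [h1.2] at h1
      · rintro rfl
        simp [IsMatch]
    simp [this, df]
  | succ n ih =>
    intro U hU
    obtain ⟨x, hx⟩ : U.Nonempty := Finset.card_pos.1 (by omega)
    have hdc := Finset.sum_card_bipartiteAbove_eq_sum_card_bipartiteBelow
      (s := U.erase x) (t := perfMatch U) (fun y P => ({x, y} : Finset α) ∈ P)
    have h1 : ∀ y ∈ U.erase x,
        ((perfMatch U).bipartiteAbove (fun y P => ({x, y} : Finset α) ∈ P) y).card = df n := by
      intro y hy
      obtain ⟨hyx, hyU⟩ := Finset.mem_erase.1 hy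
      have hm : IsMatch U {({x, y} : Finset α)} := by
        refine ⟨?_, ?_⟩
        · intro p hp
          rw [Finset.mem_singleton] at hp
          subst hp
          refine ⟨Finset.card_pair hyx.symm, ?_⟩
          simp [Finset.insert_subset_iff, hx, hyU]
        · intro p hp q hq hpq
          rw [Finset.mem_singleton] at hp hq
          exact absurd (hp.trans hq.symm) hpq
      have := card_perfMatch_superset hm
      simp only [Finset.singleton_subset_iff] at this
      rw [Finset.bipartiteAbove, this]
      apply ih
      rw [Finset.card_sdiff_of_subset, hm.card_biUnion, hU]
      · simp; omega
      · exact Finset.biUnion_subset.2 fun p hp => (hm.1 p hp).2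
    have h2 : ∀ P ∈ perfMatch U,
        ((U.erase x).bipartiteBelow (fun y P => ({x, y} : Finset α) ∈ P) P).card = 1 := by
      intro P hP
      obtain ⟨hM, hc⟩ := mem_perfMatch.1 hP
      obtain ⟨p, hp, hxp⟩ := hc x hx
      obtain ⟨a, b, hab, rfl⟩ := Finset.card_eq_two.1 (hM.1 p hp).1
      obtain ⟨y, hxy, hpe⟩ : ∃ y, x ≠ y ∧ ({a, b} : Finset α) = {x, y} := by
        rcases Finset.mem_insert.1 hxp with h | h
        · exact ⟨b, h ▸ hab, by rw [h]⟩
        · rw [Finset.mem_singleton] at h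
          exact ⟨a, h ▸ hab.symm, by rw [h, Finset.pair_comm]⟩
      rw [hpe] at hp
      rw [Finset.card_eq_one]
      refine ⟨y, ?_⟩
      ext z
      simp only [Finset.mem_bipartiteBelow, Finset.mem_erase, Finset.mem_singleton]
      constructor
      · rintro ⟨⟨hzx, -⟩, hz⟩
        have := hM.eq_of_mem hz hp (x := x) (by simp) (by simp)
        have hz' : z ∈ ({x, y} : Finset α) := by rw [← this]; simp
        simpa [hzx] using hz'
      · rintro rfl
        exact ⟨⟨hxy.symm, (hM.1 _ hp).2 (by simp)⟩, hp⟩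
    rw [Finset.sum_congr rfl h1, Finset.sum_congr rfl h2] at hdc
    simp only [Finset.sum_const, smul_eq_mul, mul_one, Finset.card_erase_of_mem hx, hU] at hdc
    rw [← hdc, df_succ]
    congr 1

/-- The matchings inside `U` made of exactly `m` members of the family `E`. -/
noncomputable def matchSets (U : Finset α) (E : Finset (Finset α)) (m : ℕ) :
    Finset (Finset (Finset α)) :=
  (E.powersetCard m).filter (IsMatch U)

/-- The `m`-th factorial moment (unnormalised) of the number of members of `E` in a perfect
matching, by double counting pairs `S ⊆ P`. -/
lemma sum_descFactorial (U : Finset α) (E : Finset (Finset α)) (m k : ℕ) (hU : U.card = 2 * k) :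
    ∑ P ∈ perfMatch U, (P ∩ E).card.descFactorial m
      = m.factorial * (matchSets U E m).card * df (k - m) := by
  have hdc := Finset.sum_card_bipartiteAbove_eq_sum_card_bipartiteBelow
      (s := matchSets U E m) (t := perfMatch U) (fun S P => S ⊆ P)
  have h1 : ∀ S ∈ matchSets U E m,
      ((perfMatch U).bipartiteAbove (fun S P => S ⊆ P) S).card = df (k - m) := by
    intro S hS
    obtain ⟨hSE, hm⟩ := Finset.mem_filter.1 hS
    rw [Finset.bipartiteAbove, card_perfMatch_superset hm]
    apply card_perfMatch
    rw [Finset.card_sdiff_of_subset, hm.card_biUnion, hU, (Finset.mem_powersetCard.1 hSE).2]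
    · omega
    · exact Finset.biUnion_subset.2 fun p hp => (hm.1 p hp).2
  have h2 : ∀ P ∈ perfMatch U,
      ((matchSets U E m).bipartiteBelow (fun S P => S ⊆ P) P).card
        = (P ∩ E).card.choose m := by
    intro P hP
    rw [← Finset.card_powersetCard]
    congr 1
    ext S
    simp only [Finset.mem_bipartiteBelow, matchSets, Finset.mem_filter, Finset.mem_powersetCard,
      Finset.subset_inter_iff]
    constructor
    · tauto
    · rintro ⟨⟨hSP, hSE⟩, hc⟩
      have hM := (mem_perfMatch.1 hP).1
      exact ⟨⟨⟨hSE, hc⟩, fun p hp => hM.1 p (hSP hp),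
        fun p hp q hq => hM.2 p (hSP hp) q (hSP hq)⟩, hSP⟩
  rw [Finset.sum_congr rfl h1, Finset.sum_congr rfl h2] at hdc
  simp only [Nat.descFactorial_eq_factorial_mul_choose, ← Finset.mul_sum, ← hdc]
  simp [mul_assoc]

lemma factorial_mul_card_matchSets_le (U : Finset α) (E : Finset (Finset α)) (m : ℕ) :
    m.factorial * (matchSets U E m).card ≤ E.card ^ m := by
  refine le_trans ?_ (Nat.descFactorial_le_pow E.card m)
  rw [Nat.descFactorial_eq_factorial_mul_choose, ← Finset.card_powersetCard]
  exact Nat.mul_le_mul_left _ (Finset.card_filter_le _ _)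

/-- If every member of `E` meets at most `d` members of `E`, then an `m`-matching in `E` has at
least `|E| - d * m` extensions to an `(m+1)`-matching; hence this lower bound. -/
lemma prod_le_factorial_mul_card_matchSets (U : Finset α) (E : Finset (Finset α)) (d : ℕ)
    (hE : ∀ p ∈ E, p.card = 2 ∧ p ⊆ U)
    (hd : ∀ p ∈ E, (E.filter fun q => p ∩ q ≠ ∅).card ≤ d) (m : ℕ) :
    ∏ i ∈ Finset.range m, (E.card - d * i) ≤ m.factorial * (matchSets U E m).card := by
  induction m with
  | zero =>
    have : matchSets U E 0 = {∅} := by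
      ext S
      simp only [matchSets, Finset.powersetCard_zero, Finset.mem_filter, Finset.mem_singleton,
        and_iff_left_iff_imp]
      rintro rfl
      simp [IsMatch]
    simp [this]
  | succ m ih =>
    have hstep : (matchSets U E m).card * (E.card - d * m)
        ≤ (matchSets U E (m + 1)).card * (m + 1) := by
      refine Finset.card_mul_le_card_mul (fun S T => S ⊆ T) ?_ ?_
      · intro S hS
        obtain ⟨hSE, hM⟩ := Finset.mem_filter.1 hS
        obtain ⟨hSE, hSc⟩ := Finset.mem_powersetCard.1 hSE
        set B := S.biUnion fun p => E.filter fun q => p ∩ q ≠ ∅ with hB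
        have hBc : B.card ≤ d * m := by
          refine Finset.card_biUnion_le.trans ?_
          refine (Finset.sum_le_card_nsmul _ _ d fun p hp => hd p (hSE hp)).trans ?_
          simp [hSc, mul_comm]
        have hfree : ∀ q ∈ E \ B, ∀ p ∈ S, p ∩ q = ∅ := by
          intro q hq p hp
          obtain ⟨hqE, hqB⟩ := Finset.mem_sdiff.1 hq
          by_contra hne
          exact hqB (Finset.mem_biUnion.2 ⟨p, hp, Finset.mem_filter.2 ⟨hqE, hne⟩⟩)
        have hnot : ∀ q ∈ E \ B, q ∉ S := by
          intro q hq hqS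
          have h := hfree q hq q hqS
          have h2 := (hE q (hSE hqS)).1
          rw [Finset.inter_self] at h
          simp [h] at h2
        calc E.card - d * m ≤ E.card - B.card := Nat.sub_le_sub_left hBc _
          _ ≤ (E \ B).card := Finset.le_card_sdiff _ _
          _ ≤ _ := by
            refine Finset.card_le_card_of_injOn (fun q => insert q S) ?_ ?_
            · intro q hq
              have hq : q ∈ E \ B := hq
              have hqE := (Finset.mem_sdiff.1 hq).1
              simp only [Finset.mem_coe, Finset.mem_bipartiteAbove, matchSets, Finset.mem_filter,
                Finset.mem_powersetCard]
              refine ⟨⟨⟨Finset.insert_subset hqE hSE, ?_⟩, ?_, ?_⟩, Finset.subset_insert _ _⟩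
              · rw [Finset.card_insert_of_notMem (hnot q hq), hSc]
              · intro p hp
                exact hE p (Finset.insert_subset hqE hSE hp)
              · intro p hp r hr hpr
                rcases Finset.mem_insert.1 hp with hpq | hp <;>
                  rcases Finset.mem_insert.1 hr with hrq | hr
                · exact absurd (hpq.trans hrq.symm) hpr
                · rw [hpq, Finset.inter_comm]; exact hfree q hq r hr
                · rw [hrq]; exact hfree q hq p hp
                · exact hM.2 p hp r hr hpr
            · intro q hq r hr hqr
              have hqr : insert q S = insert r S := hqr
              have : q ∈ insert r S := hqr ▸ Finset.mem_insert_self q S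
              exact (Finset.mem_insert.1 this).resolve_right (hnot q hq)
      · intro T hT
        obtain ⟨hTE, -⟩ := Finset.mem_filter.1 hT
        have hTc := (Finset.mem_powersetCard.1 hTE).2
        calc _ ≤ (T.powersetCard m).card := by
              refine Finset.card_le_card fun S hS => ?_
              obtain ⟨hS, hST⟩ := (Finset.mem_bipartiteBelow _).1 hS
              exact Finset.mem_powersetCard.2
                ⟨hST, (Finset.mem_powersetCard.1 (Finset.mem_filter.1 hS).1).2⟩
          _ = m + 1 := by simp [hTc]
    rw [Finset.prod_range_succ, Nat.factorial_succ]
    calc _ ≤ m.factorial * (matchSets U E m).card * (E.card - d * m) :=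
          Nat.mul_le_mul_right _ ih
      _ = m.factorial * ((matchSets U E m).card * (E.card - d * m)) := by ring
      _ ≤ m.factorial * ((matchSets U E (m + 1)).card * (m + 1)) := Nat.mul_le_mul_left _ hstep
      _ = _ := by ring

end Matchings

/-! ### Horizontal domino positions -/

section Horizontal

open scoped Classical

/-- The horizontal domino position in row `a.1` with left column `a.2`; it is a genuine
2-element set as soon as `a.2 + 1 < k`. -/
noncomputable def hEdge (k : ℕ) (a : Fin 2 × ℕ) : Finset (Cell k) :=
  Finset.univ.filter fun c => c.1 = a.1 ∧ ((c.2 : ℕ) = a.2 ∨ (c.2 : ℕ) = a.2 + 1)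

lemma mem_hEdge {k : ℕ} {a : Fin 2 × ℕ} {c : Cell k} :
    c ∈ hEdge k a ↔ c.1 = a.1 ∧ ((c.2 : ℕ) = a.2 ∨ (c.2 : ℕ) = a.2 + 1) := by
  simp [hEdge]

lemma hEdge_eq_pair {k : ℕ} (i : Fin 2) (j j' : Fin k) (h : (j' : ℕ) = j + 1) :
    hEdge k (i, (j : ℕ)) = {(i, j), (i, j')} := by
  ext ⟨a, b⟩
  simp only [mem_hEdge, Finset.mem_insert, Finset.mem_singleton, Prod.mk.injEq, Fin.ext_iff]
  omega

/-- The set of all horizontal domino positions of the `2 × k` array. -/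
noncomputable def horizSet (k : ℕ) : Finset (Finset (Cell k)) :=
  Finset.univ.filter fun p => IsHoriz p

lemma mem_horizSet {k : ℕ} {p : Finset (Cell k)} : p ∈ horizSet k ↔ IsHoriz p := by
  simp [horizSet]

lemma horizSet_eq (k : ℕ) :
    horizSet k = (Finset.univ ×ˢ Finset.range (k - 1)).image (hEdge k) := by
  ext p
  rw [mem_horizSet]
  simp only [Finset.mem_univ, true_and, Finset.mem_image, Finset.mem_product, Finset.mem_range,
    IsHoriz]
  constructor
  · rintro ⟨i, j, j', hj, rfl⟩
    exact ⟨(i, j), by have := j'.2; simp only; omega, hEdge_eq_pair i j j' hj⟩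
  · rintro ⟨⟨i, j⟩, hj, rfl⟩
    simp only at hj
    exact ⟨i, ⟨j, by omega⟩, ⟨j + 1, by omega⟩, rfl,
      hEdge_eq_pair i ⟨j, by omega⟩ ⟨j + 1, by omega⟩ rfl⟩

lemma hEdge_injOn (k : ℕ) :
    Set.InjOn (hEdge k) ((Finset.univ ×ˢ Finset.range (k - 1) : Finset (Fin 2 × ℕ)) :
      Set (Fin 2 × ℕ)) := by
  rintro ⟨i, j⟩ h ⟨i', j'⟩ h' he
  simp only [Finset.coe_product, Set.mem_prod, Finset.mem_coe, Finset.mem_range,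
    Finset.mem_univ, true_and] at h h'
  have h1 : ((i, ⟨j, by omega⟩) : Cell k) ∈ hEdge k (i', j') := by
    rw [← he, mem_hEdge]; simp
  have h2 : ((i', ⟨j', by omega⟩) : Cell k) ∈ hEdge k (i, j) := by
    rw [he, mem_hEdge]; simp
  rw [mem_hEdge] at h1 h2
  simp only at h1 h2
  refine Prod.ext h1.1 ?_
  simp only
  omega

lemma card_horizSet (k : ℕ) : (horizSet k).card = 2 * (k - 1) := by
  rw [horizSet_eq, Finset.card_image_of_injOn (hEdge_injOn k)]
  simp

lemma card_of_mem_horizSet {k : ℕ} {p : Finset (Cell k)} (hp : p ∈ horizSet k) : p.card = 2 := by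
  obtain ⟨i, j, j', hj, rfl⟩ := (Finset.mem_filter.1 hp).2
  apply Finset.card_pair
  intro h
  have := congrArg (fun c : Cell k => (c.2 : ℕ)) h
  simp only at this
  omega

/-- A horizontal domino position meets at most three: itself and its two shifts by one. -/
lemma card_meeting_le {k : ℕ} {p : Finset (Cell k)} (hp : p ∈ horizSet k) :
    ((horizSet k).filter fun q => p ∩ q ≠ ∅).card ≤ 3 := by
  rw [horizSet_eq] at hp
  obtain ⟨⟨i, j⟩, -, rfl⟩ := Finset.mem_image.1 hp
  have hsub : ((horizSet k).filter fun q => hEdge k (i, j) ∩ q ≠ ∅)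
      ⊆ ({(i, j - 1), (i, j), (i, j + 1)} : Finset (Fin 2 × ℕ)).image (hEdge k) := by
    intro q hq
    obtain ⟨hq, hne⟩ := Finset.mem_filter.1 hq
    rw [horizSet_eq] at hq
    obtain ⟨⟨i', j'⟩, -, rfl⟩ := Finset.mem_image.1 hq
    obtain ⟨c, hc⟩ := Finset.nonempty_iff_ne_empty.2 hne
    rw [Finset.mem_inter, mem_hEdge, mem_hEdge] at hc
    simp only at hc
    refine Finset.mem_image_of_mem _ ?_
    simp only [Finset.mem_insert, Finset.mem_singleton, Prod.mk.injEq]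
    have : i' = i := hc.2.1.symm.trans hc.1.1
    omega
  exact (Finset.card_le_card hsub).trans (Finset.card_image_le.trans Finset.card_le_three)

lemma isPairPartition_iff {k : ℕ} (P : Finset (Finset (Cell k))) :
    IsPairPartition P ↔ P ∈ perfMatch Finset.univ := by
  simp [mem_perfMatch, IsMatch, IsPairPartition, and_assoc]

/-- The double `finsum` against `D` is a sum over configurations. -/
lemma finsum_D (k : ℕ) (f : ℕ → ℝ) :
    (∑ᶠ v : ℕ, ∑ᶠ h : ℕ, (f h * (D k v h : ℝ)))
      = ∑ P ∈ perfMatch (Finset.univ : Finset (Cell k)), f (P ∩ horizSet k).card := by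
  set N := (Finset.univ : Finset (Finset (Cell k))).card + 1 with hN
  have hlt : ∀ Q : Finset (Finset (Cell k)), Q.card < N :=
    fun Q => Nat.lt_succ_of_le (Finset.card_le_card (Finset.subset_univ Q))
  have hPE : ∀ P : Finset (Finset (Cell k)), P.filter (fun p => IsHoriz p) = P ∩ horizSet k := by
    intro P; ext p; simp [horizSet]
  have hD : ∀ v h, D k v h = ((perfMatch (Finset.univ : Finset (Cell k))).filter fun P =>
      (P.filter fun p => IsVert p).card = v ∧ (P ∩ horizSet k).card = h).card := by
    intro v h
    unfold D
    congr 1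
    ext P
    simp only [Finset.mem_filter, Finset.mem_univ, true_and, isPairPartition_iff, hPE]
  have hv0 : ∀ v h, N ≤ v → D k v h = 0 := by
    intro v h hv
    rw [hD, Finset.card_eq_zero, Finset.filter_eq_empty_iff]
    rintro P - ⟨h1, -⟩
    have := hlt (P.filter fun p => IsVert p)
    omega
  have hh0 : ∀ v h, N ≤ h → D k v h = 0 := by
    intro v h hv
    rw [hD, Finset.card_eq_zero, Finset.filter_eq_empty_iff]
    rintro P - ⟨-, h1⟩
    have := hlt (P ∩ horizSet k)
    omega
  have hin : ∀ v, (∑ᶠ h : ℕ, (f h * (D k v h : ℝ)))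
      = ∑ h ∈ Finset.range N, f h * (D k v h : ℝ) := by
    intro v
    refine finsum_eq_sum_of_support_subset _ fun h hh => ?_
    by_contra hc
    simp only [Finset.coe_range, Set.mem_Iio, not_lt] at hc
    simp [hh0 v h hc] at hh
  simp only [hin]
  rw [finsum_eq_sum_of_support_subset (s := Finset.range N)]
  · rw [← Finset.sum_product', ← Finset.sum_fiberwise_of_maps_to
      (s := perfMatch (Finset.univ : Finset (Cell k))) (t := Finset.range N ×ˢ Finset.range N)
      (g := fun P => ((P.filter fun p => IsVert p).card, (P ∩ horizSet k).card))
      (fun P _ => by simp [hlt])]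
    refine Finset.sum_congr rfl ?_
    rintro ⟨v, h⟩ -
    rw [hD, Finset.sum_congr rfl (g := fun _ => f h)]
    · simp [mul_comm]
    · intro P hP
      have := (Finset.mem_filter.1 hP).2
      rw [Prod.mk.injEq] at this
      rw [this.2]
  · intro v hv
    by_contra hc
    simp only [Finset.coe_range, Set.mem_Iio, not_lt] at hc
    simp [hv0 v _ hc] at hv

end Horizontal

/-! ### Asymptotics -/

section Asymptotics

open Filter Topology

lemma df_eq_prod (m k : ℕ) (hmk : m ≤ k) :
    df k = (∏ i ∈ Finset.range m, (2 * k - (2 * i + 1))) * df (k - m) := by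
  induction m with
  | zero => simp
  | succ m ih =>
    rw [ih (by omega), Finset.prod_range_succ, mul_assoc]
    obtain ⟨n, rfl⟩ : ∃ n, k = m + 1 + n := ⟨k - (m + 1), by omega⟩
    rw [show m + 1 + n - m = n + 1 by omega, df_succ, show m + 1 + n - (m + 1) = n by omega,
      show 2 * (m + 1 + n) - (2 * m + 1) = 2 * n + 1 by omega]

/-- For fixed shifts `c i`, the product of `m` factors `2k - c i` is asymptotic to `(2k)^m`. -/
lemma tendsto_prod_sub (m : ℕ) (c : ℕ → ℕ) :
    Tendsto (fun k : ℕ => ((∏ i ∈ Finset.range m, (2 * k - c i) : ℕ) : ℝ) / (2 * k : ℝ) ^ m)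
      atTop (𝓝 1) := by
  have h1 : ∀ c : ℕ, Tendsto (fun k : ℕ => ((2 * k - c : ℕ) : ℝ) / (2 * k : ℝ)) atTop (𝓝 1) := by
    intro c
    have h0 : Tendsto (fun k : ℕ => 1 - (c : ℝ) / 2 / (k : ℝ)) atTop (𝓝 (1 - 0)) :=
      tendsto_const_nhds.sub (tendsto_const_div_atTop_nhds_zero_nat _)
    rw [sub_zero] at h0
    refine h0.congr' ?_
    filter_upwards [eventually_ge_atTop (c + 1)] with k hk
    have hk0 : (k : ℝ) ≠ 0 := by
      have : k ≠ 0 := by omega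
      exact_mod_cast this
    rw [Nat.cast_sub (by omega)]
    push_cast
    field_simp
  have h2 := tendsto_finsetProd (Finset.range m) fun i _ => h1 (c i)
  simp only [Finset.prod_const_one] at h2
  refine h2.congr fun k => ?_
  rw [Finset.prod_div_distrib]
  simp

end Asymptotics

open Filter in
/-- For every `m`, the `m`-th factorial moment of the number of
horizontal dominoes in a uniformly random configuration of the `2 × k` memory game,
`(1/(2k-1)!!) Σ_{v,h} h(h-1)⋯(h-m+1) D_{k,v,h}`, tends to `1` as `k → ∞`. -/
theorem horizontal_factorial_moments (m : ℕ) :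
    Tendsto
      (fun k : ℕ =>
        (∑ᶠ v : ℕ, ∑ᶠ h : ℕ, ((h.descFactorial m : ℝ) * (D k v h : ℝ))) / (df k : ℝ))
      atTop (nhds (1 : ℝ)) := by
  set b : ℕ → ℕ := fun k =>
    m.factorial * (matchSets (Finset.univ : Finset (Cell k)) (horizSet k) m).card
  have hmom : ∀ k : ℕ,
      (∑ᶠ v : ℕ, ∑ᶠ h : ℕ, ((h.descFactorial m : ℝ) * (D k v h : ℝ)))
        = (b k : ℝ) * (df (k - m) : ℝ) := by
    intro k
    rw [finsum_D k fun h => (h.descFactorial m : ℝ), ← Nat.cast_sum,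
      sum_descFactorial _ _ m k (by simp), Nat.cast_mul]
  have hup : ∀ k, b k ≤ (2 * k) ^ m := fun k =>
    (factorial_mul_card_matchSets_le _ _ m).trans
      (Nat.pow_le_pow_left (by rw [card_horizSet]; omega) m)
  have hlow : ∀ k, ∏ i ∈ Finset.range m, (2 * k - (2 + 3 * i)) ≤ b k := by
    intro k
    refine le_trans (le_of_eq ?_) (prod_le_factorial_mul_card_matchSets _ _ 3
      (fun p hp => ⟨card_of_mem_horizSet hp, Finset.subset_univ p⟩)
      (fun p hp => card_meeting_le hp) m)
    refine Finset.prod_congr rfl fun i _ => ?_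
    rw [card_horizSet]
    omega
  clear_value b
  have hbt : Tendsto (fun k : ℕ => (b k : ℝ) / (2 * k : ℝ) ^ m) atTop (nhds 1) := by
    refine tendsto_of_tendsto_of_tendsto_of_le_of_le
      (tendsto_prod_sub m fun i => 2 + 3 * i) tendsto_const_nhds ?_ ?_
    · intro k
      exact div_le_div_of_nonneg_right (Nat.cast_le.2 (hlow k)) (by positivity)
    · intro k
      have h : (b k : ℝ) ≤ (2 * k : ℝ) ^ m := by
        have h' : (b k : ℝ) ≤ (((2 * k) ^ m : ℕ) : ℝ) := Nat.cast_le.2 (hup k)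
        simpa using h'
      exact div_le_one_of_le₀ h (by positivity)
  have hdt := hbt.div (tendsto_prod_sub m fun i => 2 * i + 1) one_ne_zero
  rw [div_one] at hdt
  refine hdt.congr' ?_
  filter_upwards [eventually_ge_atTop (m + 1)] with k hk
  have hk0 : (2 * k : ℝ) ^ m ≠ 0 := by
    have : k ≠ 0 := by omega
    positivity
  have hdf : (df (k - m) : ℝ) ≠ 0 := by exact_mod_cast (df_pos _).ne'
  rw [hmom, df_eq_prod m k (by omega), Pi.div_apply, div_div_div_cancel_right₀ hk0, Nat.cast_mul,
    mul_div_mul_right _ _ hdf]
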